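/- Let x, y, z ∈ ℤΔ([m],[n]) satisfy x = y + z, and let 1 ≤ k ≤ m. Define u = y + (z∂_k)σ_{k−1} and v = (y∂_{k−1})σ_{k−1} + z in ℤΔ([m],[n]). Then u∂_{k−1} = v∂_k, u ▽_k v = yσ_k + zσ_{k−1}, and u ⋆_k v = x. -/

import Mathlib

/-!
Everything reduces to three identities between simplicial operators: `σₖ₋₁ ∂ₖ₋₁ = id`,
`σₖ₋₁ ∂ₖ = id` and `σₖ₋₁ σₖ = σₖ₋₁ σₖ₋₁`. The action of operators on `ℤΔ([m],[n])` is additive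
and functorial, so the first two give `u∂ₖ₋₁ = y∂ₖ₋₁ + z∂ₖ = v∂ₖ`. Hence the correction term
of `u ⋆ₖ v` is `(y∂ₖ₋₁)σₖ₋₁ + (z∂ₖ)σₖ₋₁`, which cancels the two degenerate summands of `u` and `v`.
The same cancellation, after one more degeneracy and using the third identity to rewrite
`(z∂ₖ)σₖ₋₁σₖ`, computes `u ▽ₖ v`.
-/

abbrev ZD (a b : ℕ) := (Fin a →o Fin b) →₀ ℤ

noncomputable def act {a b c : ℕ} (x : ZD b c) (β : Fin a →o Fin b) : ZD a c :=
  Finsupp.mapDomain (fun α => α.comp β) x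

def face {m : ℕ} (i : Fin (m+1)) : Fin m →o Fin (m+1) :=
  ⟨i.succAbove, (Fin.succAboveOrderEmb i).monotone⟩

def degen {m : ℕ} (i : Fin m) : Fin (m+1) →o Fin m :=
  ⟨i.predAbove, Fin.predAbove_right_monotone i⟩

def memO {a b : ℕ} (x : ZD a b) : Prop :=
  (x.sum fun _ c => c) = 1 ∧
    ∀ (p : ℕ) (β : Fin (p+1) →o Fin a) (γ : Fin (p+1) →o Fin b),
      Function.Injective ⇑β → Function.Injective ⇑γ → 0 ≤ act x β γ

/-- The witness operation `x ▽ₖ y`, for `x, y ∈ ℤΔ([m],[n])` and `1 ≤ k ≤ m`. -/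
noncomputable def fill {m b : ℕ} (k : ℕ) (h1 : 1 ≤ k) (h2 : k ≤ m)
    (x y : ZD (m+1) b) : ZD (m+2) b :=
  act x (degen ⟨k, by omega⟩)
    - act (act (act x (face ⟨k-1, by omega⟩)) (degen ⟨k-1, by omega⟩)) (degen ⟨k-1, by omega⟩)
    + act y (degen ⟨k-1, by omega⟩)

/-- The pasting operation `x ⋆ₖ y`. -/
noncomputable def paste {m b : ℕ} (k : ℕ) (h1 : 1 ≤ k) (h2 : k ≤ m)
    (x y : ZD (m+1) b) : ZD (m+1) b :=
  x - act (act x (face ⟨k-1, by omega⟩)) (degen ⟨k-1, by omega⟩) + y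

/-- `x` is degenerate at `k`, i.e. `x = y σₖ` for some `y` one dimension lower. -/
def isDegenAt {a b : ℕ} (x : ZD a b) (k : ℕ) : Prop :=
  ∃ (p : ℕ) (hp : a = p + 1) (hk : k < p) (y : ZD p b),
    x = hp ▸ act y (degen ⟨k, hk⟩)

def isDegen {a b : ℕ} (x : ZD a b) : Prop := ∃ k, isDegenAt x k

/-- The number of preimages of the top element `n` under `α`. -/
def npre {a n : ℕ} (α : Fin a →o Fin (n+1)) : ℕ :=
  (Finset.univ.filter fun i => α i = Fin.last n).card

/-- `x` lies in the simplicial subset `A`: all operators in the support of `x`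
have equally many preimages of the top element. -/
def inA {a n : ℕ} (x : ZD a (n+1)) : Prop :=
  ∀ α ∈ x.support, ∀ β ∈ x.support, npre α = npre β

/-- `r` is the rank of `x`: the least `i` such that some `α ∈ supp x` has `α i = n`. -/
def isRank {a n : ℕ} (x : ZD a (n+1)) (r : Fin a) : Prop :=
  IsLeast {i : Fin a | ∃ α ∈ x.support, α i = Fin.last n} r

/-- `x̌`: the part of `x` supported on operators with `α r < n`. -/
noncomputable def checkPart {a n : ℕ} (x : ZD a (n+1)) (r : Fin a) : ZD a (n+1) :=
  x.filter (fun α => ¬ (α r = Fin.last n))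

/-- `x̄`: the part of `x` supported on operators with `α r = n`. -/
noncomputable def barPart {a n : ℕ} (x : ZD a (n+1)) (r : Fin a) : ZD a (n+1) :=
  x.filter (fun α => α r = Fin.last n)

/-- `ℓ` is the level of `x` (with rank `r`). -/
def isLevel {a n : ℕ} (x : ZD a (n+1)) (r ℓ : Fin a) : Prop :=
  IsLeast {i : Fin a | ∀ α ∈ (checkPart x r).support, α i = α r} ℓ

/-- Condition (†): `x̄` is degenerate at `ℓ - 1`. -/
def dagger {a n : ℕ} (x : ZD a (n+1)) (r ℓ : Fin a) : Prop :=
  isDegenAt (barPart x r) ((ℓ : ℕ) - 1)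

/-- The corank of `x`: the greatest number of preimages of `n` among operators in `supp x`. -/
def corank {a n : ℕ} (x : ZD a (n+1)) : ℕ := x.support.sup npre

/-- `u = x̌ + (x̄ ∂ℓ) σ(ℓ-1)`. -/
noncomputable def uPart {m n : ℕ} (x : ZD (m+1) (n+1)) (r ℓ : Fin (m+1))
    (h1 : 1 ≤ (ℓ : ℕ)) : ZD (m+1) (n+1) :=
  checkPart x r
    + act (act (barPart x r) (face ℓ)) (degen ⟨(ℓ:ℕ)-1, by have := ℓ.isLt; omega⟩)

/-- `v = (x̌ ∂(ℓ-1)) σ(ℓ-1) + x̄`. -/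
noncomputable def vPart {m n : ℕ} (x : ZD (m+1) (n+1)) (r ℓ : Fin (m+1))
    (h1 : 1 ≤ (ℓ : ℕ)) : ZD (m+1) (n+1) :=
  act (act (checkPart x r) (face ⟨(ℓ:ℕ)-1, by have := ℓ.isLt; omega⟩))
      (degen ⟨(ℓ:ℕ)-1, by have := ℓ.isLt; omega⟩)
    + barPart x r

/-- The parent `w = x̌ σℓ + x̄ σ(ℓ-1)`. -/
noncomputable def parent {m n : ℕ} (x : ZD (m+1) (n+1)) (r ℓ : Fin (m+1)) :
    ZD (m+2) (n+1) :=
  act (checkPart x r) (degen ℓ)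
    + act (barPart x r) (degen ⟨(ℓ:ℕ)-1, by have := ℓ.isLt; omega⟩)

/-- Bilinear extension of composition: `(x ∘ y)_γ = Σ_{α∘β = γ} x_α · y_β`. -/
noncomputable def zcomp {p m n : ℕ} (x : ZD m n) (y : ZD p m) : ZD p n :=
  x.sum fun α c => c • Finsupp.mapDomain (fun β => α.comp β) y

theorem act_add {a b c : ℕ} (x y : ZD b c) (β : Fin a →o Fin b) :
    act (x + y) β = act x β + act y β :=
  Finsupp.mapDomain_add

theorem act_act {a b c d : ℕ} (x : ZD c d) (β : Fin b →o Fin c) (γ : Fin a →o Fin b) :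
    act (act x β) γ = act x (β.comp γ) :=
  Finsupp.mapDomain_comp.symm

theorem act_id {b c : ℕ} (x : ZD b c) : act x OrderHom.id = x :=
  Finsupp.mapDomain_id

theorem face_val {m : ℕ} (i : Fin (m+1)) (j : Fin m) :
    (face i j : ℕ) = if (j : ℕ) < i then (j : ℕ) else j + 1 := by
  change ((i.succAbove j : Fin (m+1)) : ℕ) = _
  simp only [Fin.succAbove, Fin.lt_def, Fin.val_castSucc]
  split_ifs <;> simp

theorem degen_val {m : ℕ} (i : Fin m) (j : Fin (m+1)) :
    (degen i j : ℕ) = if (i : ℕ) < j then (j : ℕ) - 1 else j := by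
  change ((i.predAbove j : Fin m) : ℕ) = _
  simp only [Fin.predAbove, Fin.lt_def, Fin.val_castSucc]
  split_ifs <;> simp

theorem degen_comp_face_self {m : ℕ} (k : ℕ) (h : k < m) (h' : k < m + 1) :
    (degen ⟨k, h⟩).comp (face ⟨k, h'⟩) = OrderHom.id := by
  ext i
  simp only [OrderHom.comp_coe, Function.comp_apply, OrderHom.id_coe, id, degen_val, face_val]
  split_ifs <;> omega

theorem degen_comp_face_succ {m : ℕ} (k : ℕ) (h1 : 1 ≤ k) (h : k - 1 < m) (h' : k < m + 1) :
    (degen ⟨k - 1, h⟩).comp (face ⟨k, h'⟩) = OrderHom.id := by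
  ext i
  simp only [OrderHom.comp_coe, Function.comp_apply, OrderHom.id_coe, id, degen_val, face_val]
  split_ifs <;> omega

theorem degen_comp_degen {m : ℕ} (k : ℕ) (h1 : 1 ≤ k) (h : k - 1 < m) (h' : k < m + 1)
    (h'' : k - 1 < m + 1) :
    (degen ⟨k - 1, h⟩).comp (degen ⟨k, h'⟩) = (degen ⟨k - 1, h⟩).comp (degen ⟨k - 1, h''⟩) := by
  ext i
  simp only [OrderHom.comp_coe, Function.comp_apply, degen_val]
  split_ifs <;> omega

/-- Turning a sum into a pasting: if `x = y + z`, `u = y + (z∂ₖ)σ(k-1)` and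
`v = (y∂(k-1))σ(k-1) + z`, then `u∂(k-1) = v∂ₖ`, `u ▽ₖ v = yσₖ + zσ(k-1)` and
`u ⋆ₖ v = x`. -/
theorem stmt8 (m n : ℕ) (x y z : ZD (m+1) (n+1)) (hx : x = y + z)
    (k : ℕ) (h1 : 1 ≤ k) (h2 : k ≤ m) :
    act (y + act (act z (face ⟨k, by omega⟩)) (degen ⟨k-1, by omega⟩)) (face ⟨k-1, by omega⟩)
      = act (act (act y (face ⟨k-1, by omega⟩)) (degen ⟨k-1, by omega⟩) + z) (face ⟨k, by omega⟩) ∧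
    fill k h1 h2 (y + act (act z (face ⟨k, by omega⟩)) (degen ⟨k-1, by omega⟩))
        (act (act y (face ⟨k-1, by omega⟩)) (degen ⟨k-1, by omega⟩) + z)
      = act y (degen ⟨k, by omega⟩) + act z (degen ⟨k-1, by omega⟩) ∧
    paste k h1 h2 (y + act (act z (face ⟨k, by omega⟩)) (degen ⟨k-1, by omega⟩))
        (act (act y (face ⟨k-1, by omega⟩)) (degen ⟨k-1, by omega⟩) + z) = x := by
  subst hx
  have hself (w : ZD m (n+1)) :
      act (act w (degen ⟨k-1, by omega⟩)) (face ⟨k-1, by omega⟩) = w := by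
    rw [act_act, degen_comp_face_self, act_id]
  have hsucc (w : ZD m (n+1)) :
      act (act w (degen ⟨k-1, by omega⟩)) (face ⟨k, by omega⟩) = w := by
    rw [act_act, degen_comp_face_succ k h1, act_id]
  have hdeg (w : ZD m (n+1)) :
      act (act w (degen ⟨k-1, by omega⟩)) (degen ⟨k, by omega⟩)
        = act (act w (degen ⟨k-1, by omega⟩)) (degen ⟨k-1, by omega⟩) := by
    rw [act_act, act_act, degen_comp_degen k h1]
  refine ⟨?_, ?_, ?_⟩
  · rw [act_add, act_add, hself, hsucc]
  · simp only [fill, act_add, hself, hdeg]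
    abel
  · simp only [paste, act_add, hself]
    abel
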